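/- With unit weight $\omega \equiv 1$, the $l$-fold power fractional derivative admits the representation ${}^pD_{a,1}^{l[\alpha,\beta]} f(t) = \frac{1}{\chi(\alpha)^l} \sum_{q=0}^{\infty} \binom{q+l-1}{l-1} (-\mu_\alpha \ln p)^q \, {}^{RL}I_{a}^{\beta q + 1} f'(t)$, for $l \geq 1$ and $f$ smooth on $[a,b]$. -/

import Mathlib

open MeasureTheory

/-- The power Mittag–Leffler function (real version). -/
noncomputable def pE (p β s : ℝ) : ℝ :=
  ∑' n : ℕ, (s * Real.log p) ^ n / Real.Gamma (β * n + 1)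

/-- Weighted Riemann–Liouville fractional integral of order `β`. -/
noncomputable def RLI (a : ℝ) (ω : ℝ → ℝ) (β : ℝ) (f : ℝ → ℝ) (t : ℝ) : ℝ :=
  (1 / (Real.Gamma β * ω t)) * ∫ τ in a..t, (t - τ) ^ (β - 1) * (ω τ * f τ)

/-- The power fractional derivative (Caputo sense) with weight `ω`,
normalization value `Nα`, so `χ(α) = (1-α)/Nα` and `μ_α = α/(1-α)`. -/
noncomputable def pD (a : ℝ) (ω : ℝ → ℝ) (α β p Nα : ℝ) (f : ℝ → ℝ) (t : ℝ) : ℝ :=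
  (1 / (((1 - α) / Nα) * ω t)) *
    ∫ τ in a..t, pE p β (-(α / (1 - α)) * (t - τ) ^ β) * deriv (fun s => ω s * f s) τ

/-- The power fractional integral, `φ(α) = α/Nα`. -/
noncomputable def pI (a : ℝ) (ω : ℝ → ℝ) (α β p Nα : ℝ) (f : ℝ → ℝ) (t : ℝ) : ℝ :=
  ((1 - α) / Nα) * f t + Real.log p * (α / Nα) * RLI a ω β f t


open intervalIntegral in
/-- Exchange of the order of integration over a triangle. -/
theorem integral_triangle_swap {F : ℝ → ℝ → ℝ} (hF : Continuous F.uncurry) {x : ℝ}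
    (hx : 0 ≤ x) :
    ∫ y in (0 : ℝ)..x, ∫ s in (0 : ℝ)..y, F y s = ∫ s in (0 : ℝ)..x, ∫ y in s..x, F y s := by
  have hmeas : MeasurableSet {q : ℝ × ℝ | q.2 ≤ q.1} :=
    measurableSet_le measurable_snd measurable_fst
  have hswap := intervalIntegral_intervalIntegral_swap
    (F := fun y s => {q : ℝ × ℝ | q.2 ≤ q.1}.indicator F.uncurry (y, s))
    (a := 0) (b := x) (c := 0) (d := x) (by
      have h : IntegrableOn F.uncurry (Set.uIcc 0 x ×ˢ Set.uIcc 0 x) :=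
        hF.continuousOn.integrableOn_compact (isCompact_uIcc.prod isCompact_uIcc)
      exact (h.mono_set (Set.prod_mono Set.uIoc_subset_uIcc Set.uIoc_subset_uIcc)).indicator hmeas)
  calc
    _ = ∫ y in (0 : ℝ)..x, ∫ s in (0 : ℝ)..x,
          {q : ℝ × ℝ | q.2 ≤ q.1}.indicator F.uncurry (y, s) := by
      refine integral_congr fun y hy => ?_
      rw [Set.uIcc_of_le hx] at hy
      have : (fun s => {q : ℝ × ℝ | q.2 ≤ q.1}.indicator F.uncurry (y, s)) =
          (Set.Iic y).indicator (F y) := by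
        ext s; simp [Set.indicator]
      simp only [this]
      rw [integral_of_le hx, setIntegral_indicator measurableSet_Iic, integral_of_le hy.1,
        Set.Ioc_inter_Iic, min_eq_right hy.2]
    _ = _ := hswap
    _ = _ := by
      refine integral_congr_ae (.of_forall fun s hs => ?_)
      rw [Set.uIoc_of_le hx] at hs
      have : (fun y => {q : ℝ × ℝ | q.2 ≤ q.1}.indicator F.uncurry (y, s)) =
          (Set.Ici s).indicator (fun y => F y s) := by
        ext y; simp [Set.indicator]
      simp only [this]
      have hset : Set.Ioc 0 x ∩ Set.Ici s = Set.Icc s x := by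
        ext y
        simp only [Set.mem_inter_iff, Set.mem_Ioc, Set.mem_Ici, Set.mem_Icc]
        exact ⟨fun h => ⟨h.2, h.1.2⟩, fun h => ⟨⟨hs.1.trans_le h.1, h.2⟩, h.1⟩⟩
      rw [integral_of_le hx, setIntegral_indicator measurableSet_Ici, hset,
        integral_Icc_eq_integral_Ioc, integral_of_le hs.2]

/-- The one-sided (Volterra) convolution on `[0, x]`. -/
noncomputable def volterraConv (u v : ℝ → ℝ) (x : ℝ) : ℝ :=
  ∫ s in (0 : ℝ)..x, u (x - s) * v s

theorem volterraConv_comm (u v : ℝ → ℝ) (x : ℝ) :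
    volterraConv u v x = volterraConv v u x := by
  have h := intervalIntegral.integral_comp_sub_left (a := 0) (b := x)
    (fun s => v (x - s) * u s) x
  simp only [sub_zero, sub_self, sub_sub_cancel] at h
  rw [volterraConv, volterraConv, ← h]
  exact intervalIntegral.integral_congr fun s _ => mul_comm _ _

theorem volterraConv_one_left (v : ℝ → ℝ) (x : ℝ) :
    volterraConv (fun _ => 1) v x = ∫ s in (0 : ℝ)..x, v s := by
  simp [volterraConv]

theorem continuous_volterraConv {u v : ℝ → ℝ} (hu : Continuous u) (hv : Continuous v) :
    Continuous (volterraConv u v) :=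
  intervalIntegral.continuous_parametric_intervalIntegral_of_continuous
    (f := fun x s => u (x - s) * v s) (by fun_prop) continuous_id

theorem volterraConv_congr_left {u u' : ℝ → ℝ} (v : ℝ → ℝ) {x : ℝ} (hx : 0 ≤ x)
    (h : ∀ s, 0 ≤ s → u s = u' s) : volterraConv u v x = volterraConv u' v x := by
  refine intervalIntegral.integral_congr fun s hs => ?_
  rw [Set.uIcc_of_le hx] at hs
  simp only [h (x - s) (sub_nonneg.2 hs.2)]

theorem volterraConv_congr_right (u : ℝ → ℝ) {v v' : ℝ → ℝ} {x : ℝ} (hx : 0 ≤ x)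
    (h : ∀ s, 0 ≤ s → v s = v' s) : volterraConv u v x = volterraConv u v' x := by
  rw [volterraConv_comm, volterraConv_congr_left u hx h, volterraConv_comm]

theorem volterraConv_const_mul_right (u v : ℝ → ℝ) (b x : ℝ) :
    volterraConv u (fun s => b * v s) x = b * volterraConv u v x := by
  simp only [volterraConv, mul_left_comm _ b, intervalIntegral.integral_const_mul]

theorem volterraConv_const_mul_add_right {u v w : ℝ → ℝ} (hu : Continuous u) (hv : Continuous v)
    (hw : Continuous w) (b x : ℝ) :
    volterraConv u (fun s => b * v s + w s) x = b * volterraConv u v x + volterraConv u w x := by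
  simp only [volterraConv]
  rw [← intervalIntegral.integral_const_mul, ← intervalIntegral.integral_add]
  · exact intervalIntegral.integral_congr fun s _ => by ring
  · exact (by fun_prop : Continuous _).intervalIntegrable _ _
  · exact (by fun_prop : Continuous _).intervalIntegrable _ _

theorem volterraConv_assoc {u v w : ℝ → ℝ} (hu : Continuous u) (hv : Continuous v)
    (hw : Continuous w) {x : ℝ} (hx : 0 ≤ x) :
    volterraConv (volterraConv u v) w x = volterraConv u (volterraConv v w) x := by
  have h := integral_triangle_swap (F := fun y s => u (x - y) * (v (y - s) * w s))
    (by fun_prop) hx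
  simp only [intervalIntegral.integral_const_mul] at h
  change _ = ∫ y in (0 : ℝ)..x, u (x - y) * ∫ s in (0 : ℝ)..y, v (y - s) * w s
  rw [h]
  refine intervalIntegral.integral_congr fun s _ => ?_
  have hshift := intervalIntegral.integral_comp_sub_right (a := s) (b := x)
    (fun r => u (x - s - r) * v r) s
  simp only [sub_self, sub_sub_sub_cancel_right] at hshift
  simp only [volterraConv]
  rw [← hshift, ← intervalIntegral.integral_mul_const]
  exact intervalIntegral.integral_congr fun y _ => by ring

/-- A convolution `K * g` with `g` of class `C¹` is a primitive of
`g(0) K + K * g'`. -/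
theorem volterraConv_eq_integral {K g : ℝ → ℝ} (hK : Continuous K) (hg : ContDiff ℝ 1 g) {x : ℝ}
    (hx : 0 ≤ x) :
    volterraConv K g x = ∫ s in (0 : ℝ)..x, (g 0 * K s + volterraConv K (deriv g) s) := by
  have hg' : Continuous (deriv g) := hg.continuous_deriv le_rfl
  have hone : Continuous (fun _ : ℝ => (1 : ℝ)) := continuous_const
  have hprim : g = fun s => g 0 * 1 + volterraConv (fun _ => 1) (deriv g) s := by
    ext s
    rw [volterraConv_one_left, intervalIntegral.integral_deriv_eq_sub
      (fun y _ => hg.differentiable one_ne_zero y) (hg'.intervalIntegrable _ _)]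
    ring
  rw [← volterraConv_one_left, volterraConv_const_mul_add_right hone hK
    (continuous_volterraConv hK hg'), ← volterraConv_assoc hone hK hg' hx]
  conv_lhs => rw [hprim]
  rw [volterraConv_const_mul_add_right hK hone (continuous_volterraConv hone hg'),
    ← volterraConv_assoc hK hone hg' hx, volterraConv_comm K,
    funext (volterraConv_comm K fun _ => 1)]

/-- If `k * K = 1 * L` then `k * (K * g)' = L * g`. -/
theorem volterraConv_deriv_step {k K L g : ℝ → ℝ} (hk : Continuous k) (hK : Continuous K)
    (hL : Continuous L) (hg : ContDiff ℝ 1 g)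
    (h : ∀ s, 0 ≤ s → volterraConv k K s = volterraConv (fun _ => 1) L s) {x : ℝ} (hx : 0 ≤ x) :
    volterraConv k (fun s => g 0 * K s + volterraConv K (deriv g) s) x = volterraConv L g x := by
  have hg' : Continuous (deriv g) := hg.continuous_deriv le_rfl
  have hone : Continuous (fun _ : ℝ => (1 : ℝ)) := continuous_const
  rw [volterraConv_eq_integral hL hg hx, ← volterraConv_one_left,
    volterraConv_const_mul_add_right hk hK (continuous_volterraConv hK hg'),
    volterraConv_const_mul_add_right hone hL (continuous_volterraConv hL hg'),
    ← volterraConv_assoc hk hK hg' hx, ← volterraConv_assoc hone hL hg' hx, h x hx,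
    volterraConv_congr_left _ hx h]

theorem Real.exp_neg_mul_rpow_le_Gamma {X s : ℝ} (hX : 0 < X) (hs : 0 ≤ s) :
    Real.exp (-X) * X ^ s ≤ Real.Gamma (s + 1) := by
  have hint := Real.GammaIntegral_convergent (s := s + 1) (by linarith)
  rw [Real.Gamma_eq_integral (by linarith), ← integral_exp_neg_Ioi, ← integral_mul_const]
  refine (setIntegral_mono_on ((integrableOn_exp_neg_Ioi X).mul_const _)
    (hint.mono_set (Set.Ioi_subset_Ioi hX.le)) measurableSet_Ioi fun x hx => ?_).trans
    (setIntegral_mono_set hint ?_ (Set.Ioi_subset_Ioi hX.le).eventuallyLE)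
  · have : X ≤ x := le_of_lt hx
    rw [add_sub_cancel_right]
    gcongr
  · filter_upwards [ae_restrict_mem measurableSet_Ioi] with x hx
    have : 0 < x := hx
    simp only [Pi.zero_apply]
    positivity

/-- The fractional beta integral `I^{u+1} (τ ↦ τ ^ v)`. -/
theorem integral_sub_rpow_mul_rpow {u v x : ℝ} (hu : 0 ≤ u) (hv : 0 ≤ v) (hx : 0 ≤ x) :
    ∫ s in (0 : ℝ)..x, (x - s) ^ u * s ^ v =
      x ^ (u + v + 1) * (Real.Gamma (u + 1) * Real.Gamma (v + 1) / Real.Gamma (u + v + 2)) := by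
  rcases hx.eq_or_lt with rfl | hx
  · rw [intervalIntegral.integral_same, Real.zero_rpow (by positivity), zero_mul]
  have h := Complex.betaIntegral_scaled ((v + 1 : ℝ) : ℂ) ((u + 1 : ℝ) : ℂ) hx
  rw [Complex.betaIntegral_eq_Gamma_mul_div _ _ (by simp; linarith) (by simp; linarith),
    ← Complex.ofReal_add, Complex.Gamma_ofReal, Complex.Gamma_ofReal, Complex.Gamma_ofReal] at h
  have hsum : v + 1 + (u + 1) = u + v + 2 := by ring
  have hexp : ((u + v + 2 : ℝ) : ℂ) - 1 = ((u + v + 1 : ℝ) : ℂ) := by push_cast; ring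
  rw [hsum, hexp, ← Complex.ofReal_cpow hx.le] at h
  have hlhs : ∫ s in (0 : ℝ)..x, (s : ℂ) ^ (((v + 1 : ℝ) : ℂ) - 1) *
        ((x : ℂ) - s) ^ (((u + 1 : ℝ) : ℂ) - 1) =
      ((∫ s in (0 : ℝ)..x, (x - s) ^ u * s ^ v : ℝ) : ℂ) := by
    rw [← intervalIntegral.integral_ofReal]
    refine intervalIntegral.integral_congr fun s hs => ?_
    rw [Set.uIcc_of_le hx.le] at hs
    simp only [Complex.ofReal_add, Complex.ofReal_one, add_sub_cancel_right]
    rw [← Complex.ofReal_sub, ← Complex.ofReal_cpow hs.1,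
      ← Complex.ofReal_cpow (sub_nonneg.2 hs.2), mul_comm, Complex.ofReal_mul]
  rw [hlhs] at h
  have h' : (∫ s in (0 : ℝ)..x, (x - s) ^ u * s ^ v) = x ^ (u + v + 1) *
      (Real.Gamma (v + 1) * Real.Gamma (u + 1) / Real.Gamma (u + v + 2)) := by exact_mod_cast h
  rw [h', mul_comm (Real.Gamma (v + 1))]

/-- The Taylor coefficients of the iterated Mittag–Leffler kernel. -/
noncomputable def mlCoeff (c β : ℝ) (l q : ℕ) : ℝ :=
  ((q + l).choose l : ℝ) * c ^ q / Real.Gamma (β * q + 1)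

/-- The kernel of the `(l + 1)`-fold power fractional derivative. -/
noncomputable def mlKernel (c β : ℝ) (l : ℕ) (s : ℝ) : ℝ :=
  ∑' q : ℕ, mlCoeff c β l q * (s ^ β) ^ q

theorem summable_abs_mlCoeff_mul_pow (c : ℝ) {β : ℝ} (hβ : 0 < β) (l : ℕ) {R : ℝ} (hR : 0 ≤ R) :
    Summable fun q => |mlCoeff c β l q| * R ^ q := by
  set Y : ℝ := 4 * (|c| * R + 1) with hY
  have hYpos : 0 < Y := by positivity
  set X : ℝ := Y ^ β⁻¹ with hX
  have hXpos : 0 < X := by positivity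
  refine Summable.of_nonneg_of_le (fun q => by positivity) (fun q => ?_)
    (summable_geometric_two.mul_left (2 ^ l * Real.exp X))
  have hXY : X ^ (β * q) = Y ^ q := by
    rw [Real.rpow_mul hXpos.le, hX, Real.rpow_inv_rpow hYpos.le hβ.ne', Real.rpow_natCast]
  have hΓ := Real.exp_neg_mul_rpow_le_Gamma hXpos (s := β * q) (by positivity)
  rw [hXY] at hΓ
  have hpos : 0 < Real.exp (-X) * Y ^ q := by positivity
  have hchoose : ((q + l).choose l : ℝ) ≤ 2 ^ (q + l) := by
    exact_mod_cast Nat.choose_le_two_pow _ _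
  have hcR : (|c| * R) ^ q ≤ (|c| * R + 1) ^ q := by gcongr; linarith
  rw [mlCoeff, abs_div, abs_mul, abs_pow, Nat.abs_cast, abs_of_pos (hpos.trans_le hΓ)]
  calc ((q + l).choose l : ℝ) * |c| ^ q / Real.Gamma (β * q + 1) * R ^ q
      = ((q + l).choose l : ℝ) * (|c| * R) ^ q / Real.Gamma (β * q + 1) := by
        rw [mul_pow]; ring
    _ ≤ 2 ^ (q + l) * (|c| * R + 1) ^ q / (Real.exp (-X) * Y ^ q) := by gcongr
    _ = 2 ^ l * Real.exp X * (1 / 2) ^ q := by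
        rw [hY, Real.exp_neg, mul_pow, pow_add, show (4 : ℝ) = 2 * 2 by norm_num, mul_pow,
          div_pow, one_pow]
        have : (|c| * R + 1) ≠ 0 := by positivity
        field_simp

theorem summable_mlCoeff_mul_pow (c : ℝ) {β : ℝ} (hβ : 0 < β) (l : ℕ) (z : ℝ) :
    Summable fun q => ‖mlCoeff c β l q * z ^ q‖ := by
  simpa [abs_mul, abs_pow] using summable_abs_mlCoeff_mul_pow c hβ l (abs_nonneg z)

theorem hasSum_mlKernel (c : ℝ) {β : ℝ} (hβ : 0 < β) (l : ℕ) (s : ℝ) :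
    HasSum (fun q => mlCoeff c β l q * (s ^ β) ^ q) (mlKernel c β l s) :=
  (summable_mlCoeff_mul_pow c hβ l (s ^ β)).of_norm.hasSum

theorem continuous_mlKernel (c : ℝ) {β : ℝ} (hβ : 0 < β) (l : ℕ) :
    Continuous (mlKernel c β l) := by
  have hentire : Continuous fun z : ℝ => ∑' q : ℕ, mlCoeff c β l q * z ^ q := by
    refine continuous_iff_continuousAt.2 fun z => ?_
    have hball : ContinuousOn (fun z : ℝ => ∑' q : ℕ, mlCoeff c β l q * z ^ q)
        (Metric.closedBall 0 (|z| + 1)) := by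
      refine continuousOn_tsum (fun q => by fun_prop)
        (summable_abs_mlCoeff_mul_pow c hβ l (by positivity : 0 ≤ |z| + 1)) fun q y hy => ?_
      rw [mem_closedBall_zero_iff] at hy
      rw [norm_mul, norm_pow, Real.norm_eq_abs (mlCoeff _ _ _ _)]
      gcongr
    refine hball.continuousAt (Metric.closedBall_mem_nhds_of_mem ?_)
    simp
  exact hentire.comp (Real.continuous_rpow_const hβ.le)

/-- Termwise integration of a series of continuous functions on `[0, x]`. -/
theorem hasSum_integral_of_summable_bound {F : ℕ → ℝ → ℝ} {G : ℝ → ℝ} {B : ℕ → ℝ} {x : ℝ}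
    (hx : 0 ≤ x) (hF : ∀ q, Continuous (F q)) (hB : Summable B)
    (hFB : ∀ q, ∀ s ∈ Set.Icc 0 x, |F q s| ≤ B q)
    (hG : ∀ s ∈ Set.Icc 0 x, HasSum (fun q => F q s) (G s)) :
    HasSum (fun q => ∫ s in (0 : ℝ)..x, F q s) (∫ s in (0 : ℝ)..x, G s) := by
  have hsub : Set.uIoc 0 x ⊆ Set.Icc 0 x := by
    rw [Set.uIoc_of_le hx]; exact Set.Ioc_subset_Icc_self
  exact intervalIntegral.hasSum_integral_of_dominated_convergence (fun q _ => B q)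
    (fun q => (hF q).aestronglyMeasurable)
    (fun q => .of_forall fun s hs => hFB q s (hsub hs)) (.of_forall fun _ _ => hB)
    intervalIntegrable_const (.of_forall fun s hs => hG s (hsub hs))

/-- Series expansion of a convolution with the kernel. -/
theorem hasSum_volterraConv_mlKernel (c : ℝ) {β : ℝ} (hβ : 0 < β) (l : ℕ) {g : ℝ → ℝ}
    (hg : Continuous g) {x : ℝ} (hx : 0 ≤ x) :
    HasSum (fun q : ℕ => mlCoeff c β l q * ∫ s in (0 : ℝ)..x, (x - s) ^ (β * q) * g s)
      (volterraConv (mlKernel c β l) g x) := by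
  obtain ⟨C, hC⟩ := isCompact_Icc.exists_bound_of_continuousOn (hg.continuousOn (s := Set.Icc 0 x))
  have h := hasSum_integral_of_summable_bound
    (F := fun q s => mlCoeff c β l q * ((x - s) ^ β) ^ q * g s)
    (G := fun s => mlKernel c β l (x - s) * g s) hx
    (fun q => ((continuous_const.mul (((Real.continuous_rpow_const hβ.le).comp
      (continuous_const.sub continuous_id)).pow q)).mul hg))
    ((summable_abs_mlCoeff_mul_pow c hβ l (by positivity : 0 ≤ x ^ β)).mul_right C)
    (fun q s hs => by
      have h1 : 0 ≤ x - s := sub_nonneg.2 hs.2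
      have h2 : x - s ≤ x := by linarith [hs.1]
      rw [abs_mul, abs_mul, abs_pow, abs_of_nonneg (by positivity : 0 ≤ (x - s) ^ β)]
      have := hC s hs
      rw [Real.norm_eq_abs] at this
      gcongr)
    (fun s _ => (hasSum_mlKernel c hβ l (x - s)).mul_right (g s))
  change HasSum _ (∫ s in (0 : ℝ)..x, mlKernel c β l (x - s) * g s)
  convert h using 2 with q
  rw [← intervalIntegral.integral_const_mul]
  refine intervalIntegral.integral_congr fun s hs => ?_
  rw [Set.uIcc_of_le hx] at hs
  rw [Real.rpow_mul (sub_nonneg.2 hs.2), Real.rpow_natCast, mul_assoc]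

theorem continuous_mlKernel_term_mul (b d x : ℝ) {β : ℝ} (hβ : 0 < β) (ij : ℕ × ℕ) :
    Continuous fun s : ℝ => (b * ((x - s) ^ β) ^ ij.1) * (d * (s ^ β) ^ ij.2) :=
  (continuous_const.mul (((Real.continuous_rpow_const hβ.le).comp
    (continuous_const.sub continuous_id)).pow _)).mul
    (continuous_const.mul ((Real.continuous_rpow_const hβ.le).pow _))

theorem integral_sum_antidiagonal_mlCoeff (c : ℝ) {β : ℝ} (hβ : 0 < β) (l q : ℕ) {x : ℝ}
    (hx : 0 ≤ x) :
    ∫ s in (0 : ℝ)..x, ∑ ij ∈ Finset.HasAntidiagonal.antidiagonal q,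
        (mlCoeff c β 0 ij.1 * ((x - s) ^ β) ^ ij.1) * (mlCoeff c β l ij.2 * (s ^ β) ^ ij.2) =
      mlCoeff c β (l + 1) q * ∫ s in (0 : ℝ)..x, (x - s) ^ (β * q) * 1 := by
  have hΓ (n : ℕ) : Real.Gamma (β * n + 1) ≠ 0 := (Real.Gamma_pos_of_pos (by positivity)).ne'
  have hterm (ij : ℕ × ℕ) (hij : ij ∈ Finset.HasAntidiagonal.antidiagonal q) :
      ∫ s in (0 : ℝ)..x,
        (mlCoeff c β 0 ij.1 * ((x - s) ^ β) ^ ij.1) * (mlCoeff c β l ij.2 * (s ^ β) ^ ij.2) =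
      ((l + ij.2).choose l : ℕ) * (c ^ q * (x ^ (β * q + 1) / Real.Gamma (β * q + 2))) := by
    have hq : (q : ℝ) = ij.1 + ij.2 := by
      exact_mod_cast (Finset.HasAntidiagonal.mem_antidiagonal.1 hij).symm
    have hcong : ∫ s in (0 : ℝ)..x,
        (mlCoeff c β 0 ij.1 * ((x - s) ^ β) ^ ij.1) * (mlCoeff c β l ij.2 * (s ^ β) ^ ij.2) =
        ∫ s in (0 : ℝ)..x, (mlCoeff c β 0 ij.1 * mlCoeff c β l ij.2) *
          ((x - s) ^ (β * ij.1) * s ^ (β * ij.2)) := by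
      refine intervalIntegral.integral_congr fun s hs => ?_
      rw [Set.uIcc_of_le hx] at hs
      rw [Real.rpow_mul (sub_nonneg.2 hs.2), Real.rpow_natCast, Real.rpow_mul hs.1,
        Real.rpow_natCast]
      ring
    rw [hcong, intervalIntegral.integral_const_mul,
      integral_sub_rpow_mul_rpow (by positivity) (by positivity) hx, ← mul_add, ← hq,
      ← Finset.HasAntidiagonal.mem_antidiagonal.1 hij, pow_add, mlCoeff, mlCoeff, add_comm l]
    have h1 := hΓ ij.1
    have h2 := hΓ ij.2
    simp only [add_zero, Nat.choose_zero_right, Nat.cast_one, one_mul]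
    field_simp
  rw [intervalIntegral.integral_finsetSum fun ij _ =>
      (continuous_mlKernel_term_mul _ _ _ hβ ij).intervalIntegrable _ _,
    Finset.sum_congr rfl hterm, ← Finset.sum_mul, ← Nat.cast_sum,
    Finset.sum_antidiagonal_choose_add]
  have hone : ∫ s in (0 : ℝ)..x, (x - s) ^ (β * q) * 1 =
      ∫ s in (0 : ℝ)..x, (x - s) ^ (β * q) * s ^ (0 : ℝ) := by simp
  rw [hone, integral_sub_rpow_mul_rpow (by positivity) le_rfl hx, mlCoeff, add_zero, zero_add,
    Real.Gamma_one, mul_one, show l + q + 1 = q + (l + 1) by ring]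
  have := hΓ q
  field_simp

/-- `k * K_l = 1 * K_{l+1}` for the iterated Mittag–Leffler kernels. -/
theorem volterraConv_mlKernel (c : ℝ) {β : ℝ} (hβ : 0 < β) (l : ℕ) {x : ℝ} (hx : 0 ≤ x) :
    volterraConv (mlKernel c β 0) (mlKernel c β l) x =
      volterraConv (fun _ => 1) (mlKernel c β (l + 1)) x := by
  have hR : 0 ≤ x ^ β := by positivity
  have h := hasSum_integral_of_summable_bound
    (F := fun q s => ∑ ij ∈ Finset.HasAntidiagonal.antidiagonal q,
      (mlCoeff c β 0 ij.1 * ((x - s) ^ β) ^ ij.1) * (mlCoeff c β l ij.2 * (s ^ β) ^ ij.2))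
    (G := fun s => mlKernel c β 0 (x - s) * mlKernel c β l s)
    (B := fun q => ∑ ij ∈ Finset.HasAntidiagonal.antidiagonal q,
      (|mlCoeff c β 0 ij.1| * (x ^ β) ^ ij.1) * (|mlCoeff c β l ij.2| * (x ^ β) ^ ij.2)) hx
    (fun q => continuous_finsetSum _ fun ij _ =>
      continuous_mlKernel_term_mul _ _ _ hβ ij)
    (summable_norm_sum_mul_antidiagonal_of_summable_norm
      (summable_abs_mlCoeff_mul_pow c hβ 0 hR).norm
      (summable_abs_mlCoeff_mul_pow c hβ l hR).norm).of_norm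
    (fun q s hs => by
      have h1 : 0 ≤ x - s := sub_nonneg.2 hs.2
      have h2 : x - s ≤ x := by linarith [hs.1]
      have h3 : 0 ≤ s := hs.1
      refine (Finset.abs_sum_le_sum_abs _ _).trans (Finset.sum_le_sum fun ij _ => ?_)
      rw [abs_mul, abs_mul, abs_mul, abs_pow, abs_pow, abs_of_nonneg (Real.rpow_nonneg h1 β),
        abs_of_nonneg (Real.rpow_nonneg h3 β)]
      gcongr
      exact hs.2)
    (fun s _ => by
      have h1 := summable_mlCoeff_mul_pow c hβ 0 ((x - s) ^ β)
      have h2 := summable_mlCoeff_mul_pow c hβ l (s ^ β)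
      have hprod := tsum_mul_tsum_eq_tsum_sum_antidiagonal_of_summable_norm h1 h2
      simp only [mlKernel]
      rw [hprod]
      exact (summable_norm_sum_mul_antidiagonal_of_summable_norm h1 h2).of_norm.hasSum)
  simp only [integral_sum_antidiagonal_mlCoeff c hβ l _ hx] at h
  rw [volterraConv_comm (fun _ => 1)]
  exact h.unique (hasSum_volterraConv_mlKernel c hβ (l + 1) continuous_const hx)

/-- The power Mittag–Leffler kernel as `mlKernel`. -/
theorem pE_eq_mlKernel (m p β s : ℝ) :
    pE p β (m * s ^ β) = mlKernel (m * Real.log p) β 0 s := by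
  refine tsum_congr fun q => ?_
  simp only [mlCoeff, add_zero, Nat.choose_zero_right, Nat.cast_one, one_mul]
  rw [mul_right_comm, mul_pow]
  ring

theorem pD_one_eq_volterraConv (a α β p Nα : ℝ) (h g : ℝ → ℝ) {t : ℝ} (ht : a ≤ t)
    (hg : ∀ s, 0 < s → deriv h (s + a) = g s) :
    pD a (fun _ => 1) α β p Nα h t = 1 / ((1 - α) / Nα) *
      volterraConv (mlKernel (-(α / (1 - α)) * Real.log p) β 0) g (t - a) := by
  have hshift := intervalIntegral.integral_comp_add_right (a := 0) (b := t - a)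
    (fun τ => pE p β (-(α / (1 - α)) * (t - τ) ^ β) * deriv h τ) a
  simp only [zero_add, sub_add_cancel] at hshift
  simp only [pD, mul_one, one_mul]
  rw [← hshift, volterraConv]
  congr 1
  refine intervalIntegral.integral_congr_ae (.of_forall fun s hs => ?_)
  rw [Set.uIoc_of_le (sub_nonneg.2 ht)] at hs
  rw [hg s hs.1, ← pE_eq_mlKernel, sub_sub, add_comm a]

theorem pD_iterate_eq_volterraConv (a α p Nα : ℝ) {β : ℝ} (hβ : 0 < β) {f : ℝ → ℝ}
    (hf : ContDiff ℝ 2 f) (l : ℕ) {t : ℝ} (ht : a ≤ t) :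
    (pD a (fun _ => 1) α β p Nα)^[l + 1] f t = (1 / ((1 - α) / Nα)) ^ (l + 1) *
      volterraConv (mlKernel (-(α / (1 - α)) * Real.log p) β l) (fun s => deriv f (s + a))
        (t - a) := by
  set c := -(α / (1 - α)) * Real.log p
  set g : ℝ → ℝ := fun s => deriv f (s + a)
  have hg : ContDiff ℝ 1 g := by
    have h : ContDiff ℝ 1 (deriv f) := (contDiff_succ_iff_deriv.1 (hf.of_le (by norm_num :
      (1 : WithTop ℕ∞) + 1 ≤ 2))).2.2
    exact h.comp (contDiff_id.add contDiff_const)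
  induction l generalizing t with
  | zero =>
    rw [zero_add, Function.iterate_one, pow_one]
    exact pD_one_eq_volterraConv a α β p Nα f g ht fun _ _ => rfl
  | succ l ih =>
    have hKc := continuous_mlKernel c hβ l
    set H : ℝ → ℝ := fun s => g 0 * mlKernel c β l s + volterraConv (mlKernel c β l) (deriv g) s
    have hH : Continuous H := (continuous_const.mul hKc).add
      (continuous_volterraConv hKc (hg.continuous_deriv le_rfl))
    have hderiv (s : ℝ) (hs : 0 < s) :
        deriv ((pD a (fun _ => 1) α β p Nα)^[l + 1] f) (s + a) =
          (1 / ((1 - α) / Nα)) ^ (l + 1) * H s := by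
      have heq : (pD a (fun _ => 1) α β p Nα)^[l + 1] f =ᶠ[nhds (s + a)]
          fun τ => (1 / ((1 - α) / Nα)) ^ (l + 1) * ∫ r in (0 : ℝ)..(τ - a), H r := by
        filter_upwards [Ioi_mem_nhds (by linarith : a < s + a)] with τ hτ
        have hτ' : a ≤ τ := le_of_lt hτ
        rw [ih hτ', volterraConv_eq_integral hKc hg (sub_nonneg.2 hτ')]
      rw [heq.deriv_eq]
      have hd : HasDerivAt (fun y => ∫ r in (0 : ℝ)..y, H r) (H (s + a - a)) (s + a - a) :=
        intervalIntegral.integral_hasDerivAt_right (hH.intervalIntegrable _ _)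
          (hH.stronglyMeasurableAtFilter _ _) hH.continuousAt
      have := ((hd.comp (s + a) ((hasDerivAt_id (s + a)).sub_const a)).const_mul
        ((1 / ((1 - α) / Nα)) ^ (l + 1))).deriv
      simpa [Function.comp_def] using this
    rw [Function.iterate_succ_apply', pD_one_eq_volterraConv a α β p Nα _ _ ht hderiv,
      ← volterraConv_deriv_step (continuous_mlKernel c hβ 0) hKc (continuous_mlKernel c hβ (l + 1))
        hg (fun s hs => volterraConv_mlKernel c hβ l hs) (sub_nonneg.2 ht),
      volterraConv_const_mul_right, pow_succ' _ (l + 1), mul_assoc]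

theorem RLI_one_eq_integral (a γ : ℝ) (g : ℝ → ℝ) (t : ℝ) :
    RLI a (fun _ => 1) (γ + 1) g t =
      1 / Real.Gamma (γ + 1) * ∫ s in (0 : ℝ)..(t - a), (t - a - s) ^ γ * g (s + a) := by
  have hshift := intervalIntegral.integral_comp_add_right (a := 0) (b := t - a)
    (fun τ => (t - τ) ^ γ * g τ) a
  simp only [zero_add, sub_add_cancel] at hshift
  simp only [RLI, mul_one, one_mul, add_sub_cancel_right]
  rw [← hshift]
  simp only [sub_sub, add_comm a]

/-- Series representation of the `l`-fold power fractional derivative with unit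
weight. -/
theorem pD_iterate_series (a α β p Nα : ℝ) (hα0 : 0 < α) (hα1 : α < 1) (hβ : 0 < β)
    (hp : 0 < p) (hN : 0 < Nα) (l : ℕ) (hl : 1 ≤ l) (f : ℝ → ℝ) (hf : ContDiff ℝ (⊤ : ℕ∞) f)
    (t : ℝ) (ht : a ≤ t) :
    (pD a (fun _ => 1) α β p Nα)^[l] f t =
      (1 / ((1 - α) / Nα) ^ l) *
        ∑' q : ℕ, ((q + l - 1).choose (l - 1) : ℝ) * (-(α / (1 - α)) * Real.log p) ^ q *
          RLI a (fun _ => 1) (β * q + 1) (deriv f) t := by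
  obtain ⟨l, rfl⟩ := Nat.exists_eq_add_of_le' hl
  have hg : Continuous fun s => deriv f (s + a) :=
    (hf.continuous_deriv (by simp)).comp (continuous_id.add continuous_const)
  rw [pD_iterate_eq_volterraConv a α p Nα hβ (by exact_mod_cast contDiff_infty.1 hf 2) l ht,
    ← (hasSum_volterraConv_mlKernel _ hβ l hg (sub_nonneg.2 ht)).tsum_eq, one_div_pow]
  congr 1
  refine tsum_congr fun q => ?_
  rw [RLI_one_eq_integral, mlCoeff, Nat.add_sub_cancel, ← add_assoc, Nat.add_sub_cancel]
  ring
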